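/- arXiv:math/0312232 — 2 statements merged into one kernel-verified Lean document; each statement's English description precedes it below -/
import Mathlib

section
/- Let 0 ≤ r1, r2 ≤ n and 0 ≤ s ≤ min(r1, n − r1, r2, n − r2). Then for every t ∈ ℂ, λ_s^{r1,r2}(t; n) = binom(r2, s)⁻¹ · Σ_{j=0}^s binom(t, j) · binom(r2 − t, s − j) · λ_s^{r1,s}(j; n), where λ_s^{r1,s} is the Hahn kernel with second parameter r2 = s. -/
/-- Falling factorial `z(z-1)⋯(z-k+1)` for complex `z`. -/
noncomputable def cfall (z : ℂ) (k : ℕ) : ℂ := ∏ i ∈ Finset.range k, (z - i)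

/-- Generalized binomial coefficient `binom(t, j)` for complex `t`. -/
noncomputable def cbinom (t : ℂ) (j : ℕ) : ℂ := cfall t j / (Nat.factorial j)

/-- The Hahn kernel `λ_s^{r1,r2}(t; n)`. -/
noncomputable def hahn (n r1 r2 s : ℕ) (t : ℂ) : ℂ :=
  ∑ j ∈ Finset.range (s + 1),
    (-1 : ℂ) ^ j * cbinom t j * cfall (s : ℂ) j * cfall ((n : ℂ) - s + 1) j /
      (cfall ((n : ℂ) - r1) j * cfall (r2 : ℂ) j)

lemma cfall_add' (z : ℂ) (i k : ℕ) : cfall z (i + k) = cfall z i * cfall (z - i) k := by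
  unfold cfall
  rw [Finset.prod_range_add]
  congr 1
  apply Finset.prod_congr rfl
  intro x _
  push_cast
  ring

lemma cfall_nat (i k : ℕ) : cfall ((i + k : ℕ) : ℂ) i * (k.factorial : ℂ) = ((i + k).factorial : ℂ) := by
  induction i with
  | zero => simp [cfall]
  | succ i ih =>
    have h : cfall ((i + 1 + k : ℕ) : ℂ) (i + 1) = ((i + k : ℕ) + 1 : ℂ) * cfall ((i + k : ℕ) : ℂ) i := by
      rw [add_comm i 1, cfall_add', add_comm 1 i]
      congr 1
      · simp [cfall]; ring
      · congr 1; push_cast; ring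
    rw [h, mul_assoc, ih, show i + 1 + k = (i + k) + 1 by ring, Nat.factorial_succ]
    push_cast
    ring

lemma cfall_zero_of_lt (j i : ℕ) (h : j < i) : cfall (j : ℂ) i = 0 := by
  unfold cfall
  exact Finset.prod_eq_zero (Finset.mem_range.2 h) (sub_self _)

lemma cbinom_eq (t : ℂ) (j : ℕ) : cbinom t j = Ring.choose t j := by
  have h := Ring.descPochhammer_eq_factorial_smul_choose t j
  have h0 : (j.factorial : ℂ) ≠ 0 := by exact_mod_cast j.factorial_ne_zero
  rw [← Polynomial.aeval_eq_smeval, Polynomial.aeval_def, Polynomial.eval₂_eq_eval_map, descPochhammer_map,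
    descPochhammer_eval_eq_prod_range] at h
  unfold cbinom cfall
  rw [h, nsmul_eq_mul]
  field_simp

lemma cbinom_vand (a b : ℂ) (m : ℕ) :
    ∑ k ∈ Finset.range (m + 1), cbinom a k * cbinom b (m - k) = cbinom (a + b) m := by
  simp only [cbinom_eq]
  rw [Ring.add_choose_eq m (Commute.all a b), Finset.Nat.sum_antidiagonal_eq_sum_range_succ_mk]

lemma cb_inner_sum (t r : ℂ) (i m : ℕ) :
    ∑ j ∈ Finset.range (i + m + 1), cbinom t j * cbinom (r - t) (i + m - j) * cbinom (j : ℂ) i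
      = cbinom t i * cbinom (r - i) m := by
  rw [add_assoc, Finset.sum_range_add, Finset.sum_eq_zero, zero_add]
  · have := cbinom_vand (t - i) (r - t) m
    rw [show t - i + (r - t) = r - i by ring] at this
    rw [← this, Finset.mul_sum]
    apply Finset.sum_congr rfl
    intro k _
    rw [Nat.add_sub_add_left]
    have h := cfall_nat i k
    have h1 : (i.factorial : ℂ) ≠ 0 := by exact_mod_cast i.factorial_ne_zero
    have h2 : (k.factorial : ℂ) ≠ 0 := by exact_mod_cast k.factorial_ne_zero
    have h3 : ((i + k).factorial : ℂ) ≠ 0 := by exact_mod_cast (i + k).factorial_ne_zero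
    have h4 : cbinom t (i + k) * cbinom ((i + k : ℕ) : ℂ) i = cbinom t i * cbinom (t - i) k := by
      unfold cbinom
      rw [cfall_add' t i k]
      field_simp
      rw [← h]; ring
    rw [mul_right_comm, h4]; ring
  · intro j hj
    unfold cbinom
    rw [cfall_zero_of_lt j i (Finset.mem_range.1 hj)]
    simp

lemma cfall_ne (r i : ℕ) (h : i ≤ r) : cfall (r : ℂ) i ≠ 0 := by
  obtain ⟨k, rfl⟩ := Nat.exists_eq_add_of_le h
  intro h0
  have := cfall_nat i k
  rw [h0, zero_mul] at this
  exact (i + k).factorial_ne_zero (by exact_mod_cast this.symm)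

lemma choose_eq (r s : ℕ) : (r.choose s : ℂ) = cbinom r s := by
  rw [cbinom_eq, Ring.choose_natCast]

/-- For `0 ≤ r1, r2 ≤ n`, `0 ≤ s ≤ min(r1, n-r1, r2, n-r2)` and every `t ∈ ℂ`,
`λ_s^{r1,r2}(t; n) = binom(r2,s)⁻¹ Σ_{j=0}^s binom(t,j) binom(r2-t,s-j) λ_s^{r1,s}(j; n)`. -/
theorem stmt_6 (n r1 r2 s : ℕ) (h1 : r1 ≤ n) (h2 : r2 ≤ n)
    (hs : s ≤ min (min r1 (n - r1)) (min r2 (n - r2))) (t : ℂ) :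
    hahn n r1 r2 s t =
      ((r2.choose s : ℂ))⁻¹ *
        ∑ j ∈ Finset.range (s + 1),
          cbinom t j * cbinom ((r2 : ℂ) - t) (s - j) * hahn n r1 s s (j : ℂ) := by
  have hsr : s ≤ r2 := by omega
  unfold hahn
  simp only [Finset.mul_sum]
  rw [Finset.sum_comm]
  apply Finset.sum_congr rfl
  intro i hi
  have his : i ≤ s := by have := Finset.mem_range.1 hi; omega
  have e1 := cfall_ne s i his
  have e2 := cfall_ne r2 i (by omega)
  have e3 := cfall_ne r2 s hsr
  obtain ⟨m, rfl⟩ := Nat.exists_eq_add_of_le his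
  have key := cb_inner_sum t r2 i m
  have h5 : ((i + m).factorial : ℂ) ≠ 0 := by exact_mod_cast (i + m).factorial_ne_zero
  have h6 : (m.factorial : ℂ) ≠ 0 := by exact_mod_cast m.factorial_ne_zero
  have hb : (r2.choose (i + m) : ℂ)⁻¹ * cbinom ((r2 : ℂ) - i) m
      = cfall ((i + m : ℕ) : ℂ) i / cfall (r2 : ℂ) i := by
    rw [choose_eq]
    unfold cbinom
    have h := cfall_nat i m
    rw [cfall_add'] at e3 ⊢
    have e4 := right_ne_zero_of_mul e3
    rw [← h] at h5 ⊢
    field_simp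
  set c : ℂ := (-1 : ℂ) ^ i * cfall ((n : ℂ) - (i + m : ℕ) + 1) i / cfall ((n : ℂ) - r1) i with hc
  trans (r2.choose (i + m) : ℂ)⁻¹ * (cbinom t i * cbinom ((r2 : ℂ) - i) m) * c
  · rw [mul_left_comm, hb, hc]
    simp only [div_eq_mul_inv, mul_inv]
    ring
  · rw [← key, Finset.mul_sum, Finset.sum_mul]
    apply Finset.sum_congr rfl
    intro j _
    rw [hc]
    simp only [div_eq_mul_inv, mul_inv]
    have e5 := mul_inv_cancel₀ e1
    linear_combination (-(r2.choose (i + m) : ℂ)⁻¹ * cbinom t j * cbinom ((r2 : ℂ) - t) (i + m - j) * cbinom (j : ℂ) i * ((-1 : ℂ) ^ i * cfall ((n : ℂ) - (i + m : ℕ) + 1) i * (cfall ((n : ℂ) - r1) i)⁻¹)) * e5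
end

section
/- Let 0 ≤ r1, r2 ≤ n and let s, s' be distinct integers with 0 ≤ s, s' ≤ min(r1, n − r1, r2, n − r2). Then Σ_{x1 ∈ X_{r1}} Σ_{x2 ∈ X_{r2}} λ_s^{r1,r2}(|x2 \ x1|; n) · λ_{s'}^{r1,r2}(|x2 \ x1|; n) = 0; that is, the operators Λ_s^{r1,r2} and Λ_{s'}^{r1,r2} are orthogonal with respect to the Hilbert–Schmidt inner product. -/
/-- The operator `Λ_s^{r1,r2} : (X_{r1} → ℂ) → (X_{r2} → ℂ)` with kernel
`λ_s^{r1,r2}(|x2 \ x1|; n)`. -/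
noncomputable def Lam (Ω : Type*) [Fintype Ω] [DecidableEq Ω] (n r1 r2 s : ℕ)
    (ψ : {x : Finset Ω // x.card = r1} → ℂ) : {x : Finset Ω // x.card = r2} → ℂ :=
  fun x2 => ∑ x1 : {x : Finset Ω // x.card = r1},
    hahn n r1 r2 s ((((x2 : Finset Ω) \ (x1 : Finset Ω)).card : ℕ) : ℂ) * ψ x1

open Finset

lemma cfall_nat_s11 (a k : ℕ) : cfall (a : ℂ) k = (a.descFactorial k : ℂ) := by
  unfold cfall
  induction k with
  | zero => simp
  | succ k ih =>
    rw [prod_range_succ, ih, Nat.descFactorial_succ]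
    rcases le_or_gt k a with h | h
    · push_cast [Nat.cast_sub h]; ring
    · simp [Nat.descFactorial_of_lt h]

lemma cfall_succ (z : ℂ) (k : ℕ) : cfall z (k + 1) = cfall z k * (z - k) := by
  unfold cfall; rw [prod_range_succ]

lemma vand (p q r j m : ℕ) (hr : r ≤ p + q) (hj : j ≤ p) (hm : m ≤ q) :
    ∑ ab ∈ antidiagonal r, p.choose ab.1 * q.choose ab.2 * (ab.1.choose j * ab.2.choose m)
      = p.choose j * q.choose m * (p + q - j - m).choose (p + q - r) := by
  rcases lt_or_ge r (j + m) with h | h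
  · rw [Nat.choose_eq_zero_of_lt (n := p + q - j - m) (by omega), mul_zero]
    apply sum_eq_zero
    rintro ⟨a, b⟩ hab
    simp only [HasAntidiagonal.mem_antidiagonal] at hab
    rcases lt_or_ge a j with h' | h'
    · simp [Nat.choose_eq_zero_of_lt h']
    · have : b < m := by omega
      simp [Nat.choose_eq_zero_of_lt this]
  · have e1 : (p + q - j - m).choose (p + q - r) = ((p - j) + (q - m)).choose (r - j - m) := by
      rw [← Nat.choose_symm (by omega)]
      congr 1 <;> omega
    rw [e1, Nat.add_choose_eq, mul_sum]
    symm
    apply sum_of_injOn (fun ab : ℕ × ℕ => (ab.1 + j, ab.2 + m))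
    · rintro ⟨a, b⟩ _ ⟨a', b'⟩ _ h
      simp only [Prod.mk.injEq] at h ⊢
      omega
    · rintro ⟨a, b⟩ h
      simp only [mem_coe, HasAntidiagonal.mem_antidiagonal] at h ⊢
      omega
    · rintro ⟨a, b⟩ hab hn
      simp only [HasAntidiagonal.mem_antidiagonal] at hab
      rcases lt_or_ge a j with h' | h'
      · simp [Nat.choose_eq_zero_of_lt h']
      rcases lt_or_ge b m with h'' | h''
      · simp [Nat.choose_eq_zero_of_lt h'']
      exfalso
      apply hn
      refine ⟨(a - j, b - m), ?_, ?_⟩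
      · simp only [mem_coe, HasAntidiagonal.mem_antidiagonal]; omega
      · simp only [Prod.mk.injEq]; omega
    · rintro ⟨a, b⟩ hab
      have h1 := Nat.choose_mul (n := p) (k := a + j) (s := j) (by omega)
      have h2 := Nat.choose_mul (n := q) (k := b + m) (s := m) (by omega)
      simp only [Nat.add_sub_cancel] at h1 h2
      calc _ = (p.choose j * (p - j).choose a) * (q.choose m * (q - m).choose b) := by ring
        _ = _ := by rw [← h1, ← h2]; ring

lemma sum_sets {Ω : Type*} [Fintype Ω] [DecidableEq Ω] (r : ℕ) (x : Finset Ω) (F : ℕ → ℂ) :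
    ∑ y : {y : Finset Ω // y.card = r}, F (((y : Finset Ω) \ x).card)
      = ∑ ab ∈ antidiagonal r, ((xᶜ.card.choose ab.1 : ℂ) * (x.card.choose ab.2 : ℂ)) * F ab.1 := by
  have h0 : ∑ y : {y : Finset Ω // y.card = r}, F (((y : Finset Ω) \ x).card)
      = ∑ y ∈ powersetCard r univ, F ((y \ x).card) := by
    symm
    apply sum_subtype
    intro y; simp [mem_powersetCard]
  rw [h0, ← sum_fiberwise_of_maps_to (g := fun y => ((y \ x).card, (y ∩ x).card))
    (t := antidiagonal r)]
  · apply sum_congr rfl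
    rintro ⟨a, b⟩ hab
    simp only [HasAntidiagonal.mem_antidiagonal] at hab
    have : ∑ y ∈ powersetCard r univ with ((y \ x).card, (y ∩ x).card) = (a, b), F ((y \ x).card)
        = ∑ y ∈ powersetCard r univ with ((y \ x).card, (y ∩ x).card) = (a, b), F a := by
      apply sum_congr rfl
      intro y hy
      simp only [mem_filter, Prod.mk.injEq] at hy
      rw [hy.2.1]
    rw [this, sum_const, nsmul_eq_mul]
    congr 1
    rw [← card_powersetCard, ← card_powersetCard, ← Nat.cast_mul, ← card_product]
    congr 1
    apply card_bij' (fun y _ => (y \ x, y ∩ x)) (fun AB _ => AB.1 ∪ AB.2)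
    · intro y hy
      simp only [mem_filter, Prod.mk.injEq] at hy
      simp only [mem_product, mem_powersetCard]
      refine ⟨⟨?_, hy.2.1⟩, inter_subset_right, hy.2.2⟩
      intro z; simp
    · rintro ⟨A, B⟩ hAB
      simp only [mem_product, mem_powersetCard] at hAB
      obtain ⟨⟨h1, h2⟩, h3, h4⟩ := hAB
      have e1 : (A ∪ B) \ x = A := by
        ext z
        have := @h1 z; have := @h3 z
        simp only [mem_compl] at *
        simp only [mem_sdiff, mem_union]; tauto
      have e2 : (A ∪ B) ∩ x = B := by
        ext z
        have := @h1 z; have := @h3 z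
        simp only [mem_compl] at *
        simp only [mem_inter, mem_union]; tauto
      have e3 := card_sdiff_add_card_inter (A ∪ B) x
      simp only [mem_filter, mem_powersetCard, e1, e2, h2, h4, subset_univ, true_and, and_true]
      rw [e1, e2] at e3
      omega
    · intro y _; exact sdiff_union_inter y x
    · rintro ⟨A, B⟩ hAB
      simp only [mem_product, mem_powersetCard] at hAB
      obtain ⟨⟨h1, h2⟩, h3, h4⟩ := hAB
      have e1 : (A ∪ B) \ x = A := by
        ext z
        have := @h1 z; have := @h3 z
        simp only [mem_compl] at *
        simp only [mem_sdiff, mem_union]; tauto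
      have e2 : (A ∪ B) ∩ x = B := by
        ext z
        have := @h1 z; have := @h3 z
        simp only [mem_compl] at *
        simp only [mem_inter, mem_union]; tauto
      simp only [e1, e2]
  · intro y hy
    simp only [mem_powersetCard] at hy
    simp only [HasAntidiagonal.mem_antidiagonal]
    rw [card_sdiff_add_card_inter]; exact hy.2

lemma diff_zero (s d m : ℕ) (h : d + m < s) (u v : ℂ) :
    ∑ j ∈ range (s + 1), (-1 : ℂ) ^ j * (s.choose j : ℂ) * (cfall (u - j) d * cfall (v - j) m) = 0 := by
  classical
  let P : Polynomial ℂ := (∏ i ∈ range d, (Polynomial.C (u - i) - Polynomial.X)) *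
    ∏ i ∈ range m, (Polynomial.C (v - i) - Polynomial.X)
  have hl : ∀ (w : ℂ) (k : ℕ), (∏ i ∈ range k, (Polynomial.C (w - i) - Polynomial.X)).natDegree ≤ k := by
    intro w k
    refine (Polynomial.natDegree_prod_le _ _).trans ?_
    refine (sum_le_card_nsmul _ _ 1 ?_).trans (by simp)
    intro i _
    compute_degree
  have hP : P.natDegree < s :=
    lt_of_le_of_lt (Polynomial.natDegree_mul_le.trans (add_le_add (hl u d) (hl v m))) h
  have h1 := congrFun (Polynomial.fwdDiff_iter_eq_zero_of_degree_lt hP) 0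
  rw [fwdDiff_iter_eq_sum_shift] at h1
  have h2 : ∑ j ∈ range (s + 1), (-1 : ℂ) ^ j * (s.choose j : ℂ) * (cfall (u - j) d * cfall (v - j) m)
     = (-1) ^ s * ∑ k ∈ range (s + 1), ((-1 : ℤ) ^ (s - k) * (s.choose k : ℤ)) • P.eval ((0 : ℂ) + k • (1 : ℂ)) := by
    rw [mul_sum]
    apply sum_congr rfl
    intro j hj
    have hj' : j ≤ s := by simp at hj; omega
    have e : P.eval ((0 : ℂ) + j • (1 : ℂ)) = cfall (u - j) d * cfall (v - j) m := by
      simp only [P, cfall, Polynomial.eval_mul, Polynomial.eval_prod]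
      congr 1 <;> (apply prod_congr rfl; intro i _; simp; ring)
    rw [e]
    obtain ⟨k, rfl⟩ := Nat.exists_eq_add_of_le hj'
    simp only [zsmul_eq_mul, Nat.add_sub_cancel_left]
    push_cast
    have : ((-1 : ℂ) ^ k) * (-1) ^ k = 1 := by rw [← mul_pow]; simp
    rw [pow_add]
    linear_combination (-(-1 : ℂ) ^ j * ((j + k).choose j : ℂ) * (cfall (u - j) d * cfall (v - j) m)) * this
  rw [h2, h1]
  simp

lemma term_id (n r s j m : ℕ) (hr : r ≤ n) (hj : j ≤ s) (hm : m < s) (hs : s ≤ r) (hs2 : s ≤ n - r) :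
    ((n - s + 1).descFactorial j : ℂ) / (r.descFactorial j : ℂ) * ((n - j - m).choose (n - r) : ℂ)
    = ((n - s + 1).factorial : ℂ) / ((n - r).factorial * r.factorial) *
      (((n - m - j).descFactorial (s - 1 - m) : ℂ) * ((r - j).descFactorial m : ℂ)) := by
  rcases lt_or_ge r (j + m) with h | h
  · rw [Nat.choose_eq_zero_of_lt (n := n - j - m) (by omega),
      Nat.descFactorial_of_lt (n := r - j) (by omega)]
    simp
  · have a1 := Nat.factorial_mul_descFactorial (n := n - s + 1) (k := j) (by omega)
    have a2 := Nat.factorial_mul_descFactorial (n := r) (k := j) (by omega)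
    have a3 := Nat.choose_mul_factorial_mul_factorial (n := n - j - m) (k := n - r) (by omega)
    have a4 := Nat.factorial_mul_descFactorial (n := n - m - j) (k := s - 1 - m) (by omega)
    have a5 := Nat.factorial_mul_descFactorial (n := r - j) (k := m) (by omega)
    rw [show n - j - m - (n - r) = r - j - m by omega] at a3
    rw [show n - m - j - (s - 1 - m) = n - s + 1 - j by omega,
      show n - m - j = n - j - m by omega] at a4
    rw [show n - m - j = n - j - m by omega]
    have f : ∀ k : ℕ, (k.factorial : ℂ) ≠ 0 := fun k => by exact_mod_cast k.factorial_ne_zero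
    have g2 : (r.descFactorial j : ℂ) ≠ 0 := by
      have := Nat.descFactorial_eq_zero_iff_lt (n := r) (k := j)
      intro h0
      have := this.1 (by exact_mod_cast h0)
      omega
    have b1 : ((n - s + 1).descFactorial j : ℂ) = (n - s + 1).factorial / (n - s + 1 - j).factorial := by
      rw [eq_div_iff (f _), ← a1]; push_cast; ring
    have b2 : (r.descFactorial j : ℂ) = r.factorial / (r - j).factorial := by
      rw [eq_div_iff (f _), ← a2]; push_cast; ring
    have b3 : ((n - j - m).choose (n - r) : ℂ) = (n - j - m).factorial / ((n - r).factorial * (r - j - m).factorial) := by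
      rw [eq_div_iff (mul_ne_zero (f _) (f _)), ← a3]; push_cast; ring
    have b4 : ((n - j - m).descFactorial (s - 1 - m) : ℂ) = (n - j - m).factorial / (n - s + 1 - j).factorial := by
      rw [eq_div_iff (f _), ← a4]; push_cast; ring
    have b5 : ((r - j).descFactorial m : ℂ) = (r - j).factorial / (r - j - m).factorial := by
      rw [eq_div_iff (f _), ← a5]; push_cast; ring
    rw [b1, b2, b3, b4, b5]
    have := f (n - s + 1 - j); have := f (r - j); have := f (n - r); have := f (r - j - m)
    have := f r
    field_simp

lemma orth0 (n r1 r2 s m : ℕ) (h1 : r1 ≤ n) (h2 : r2 ≤ n) (hm : m < s)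
    (hs : s ≤ min (min r1 (n - r1)) (min r2 (n - r2))) :
    ∑ ab ∈ antidiagonal r2, (((n - r1).choose ab.1 : ℂ) * (r1.choose ab.2 : ℂ)) *
      (hahn n r1 r2 s (ab.1 : ℂ) * cfall (ab.2 : ℂ) m) = 0 := by
  simp only [le_min_iff] at hs
  obtain ⟨⟨hs1, hs2⟩, hs3, hs4⟩ := hs
  have f : ∀ k : ℕ, (k.factorial : ℂ) ≠ 0 := fun k => by exact_mod_cast k.factorial_ne_zero
  simp only [hahn, sum_mul, mul_sum]
  rw [sum_comm]
  have key : ∀ j ∈ range (s + 1), ∑ ab ∈ antidiagonal r2,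
      ((n - r1).choose ab.1 : ℂ) * (r1.choose ab.2 : ℂ) *
      ((-1 : ℂ) ^ j * cbinom (ab.1 : ℂ) j * cfall (s : ℂ) j * cfall ((n : ℂ) - s + 1) j /
      (cfall ((n : ℂ) - r1) j * cfall (r2 : ℂ) j) * cfall (ab.2 : ℂ) m) =
      (r1.descFactorial m : ℂ) * (((n - s + 1).factorial : ℂ) / ((n - r2).factorial * r2.factorial)) *
      ((-1 : ℂ) ^ j * (s.choose j : ℂ) *
        (cfall (((n - m : ℕ) : ℂ) - j) (s - 1 - m) * cfall ((r2 : ℂ) - j) m)) := by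
    intro j hj
    have hj' : j ≤ s := by simp at hj; omega
    have hv := congrArg (Nat.cast (R := ℂ)) (vand (n - r1) r1 r2 j m (by omega) (by omega) (by omega))
    rw [show n - r1 + r1 = n by omega] at hv
    push_cast at hv
    have ht := term_id n r2 s j m h2 hj' hm hs3 hs4
    rw [show (n : ℂ) - s + 1 = ((n - s + 1 : ℕ) : ℂ) by push_cast [Nat.cast_sub (show s ≤ n by omega)]; ring,
      show (n : ℂ) - r1 = ((n - r1 : ℕ) : ℂ) by push_cast [Nat.cast_sub h1]; ring,
      show ((n - m : ℕ) : ℂ) - j = ((n - m - j : ℕ) : ℂ) by rw [Nat.cast_sub (show j ≤ n - m by omega)],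
      show (r2 : ℂ) - j = ((r2 - j : ℕ) : ℂ) by rw [Nat.cast_sub (show j ≤ r2 by omega)]]
    simp only [cbinom, cfall_nat_s11]
    have d : ∀ a k : ℕ, (a.descFactorial k : ℂ) = k.factorial * a.choose k := by
      intro a k; rw [Nat.descFactorial_eq_factorial_mul_choose]; push_cast; ring
    have hp : ((n - r1).choose j : ℂ) ≠ 0 := by
      exact_mod_cast (Nat.choose_pos (show j ≤ n - r1 by omega)).ne'
    calc _ = ((-1 : ℂ) ^ j * (s.choose j : ℂ) * m.factorial / ((n - r1).choose j : ℂ) *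
          (((n - s + 1).descFactorial j : ℂ) / (r2.descFactorial j : ℂ))) *
          ∑ ab ∈ antidiagonal r2, ((n - r1).choose ab.1 : ℂ) * (r1.choose ab.2 : ℂ) *
            ((ab.1.choose j : ℂ) * (ab.2.choose m : ℂ)) := by
          rw [mul_sum]
          apply sum_congr rfl
          intro ab _
          rw [d ab.1, d s, d (n - r1), d ab.2]
          have := f j
          field_simp
      _ = ((-1 : ℂ) ^ j * (s.choose j : ℂ) * (m.factorial * r1.choose m)) *
          (((n - s + 1).descFactorial j : ℂ) / (r2.descFactorial j : ℂ) * ((n - j - m).choose (n - r2) : ℂ)) := by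
          rw [hv]; field_simp
      _ = _ := by rw [ht, d r1]; ring
  rw [sum_congr rfl key, ← mul_sum, diff_zero _ _ _ (by omega), mul_zero]

lemma orth1 (n r1 r2 s : ℕ) (h1 : r1 ≤ n) (h2 : r2 ≤ n)
    (hs : s ≤ min (min r1 (n - r1)) (min r2 (n - r2))) (j : ℕ) : ∀ m, j + m < s →
    ∑ ab ∈ antidiagonal r2, (((n - r1).choose ab.1 : ℂ) * (r1.choose ab.2 : ℂ)) *
      (hahn n r1 r2 s (ab.1 : ℂ) * (cfall (ab.1 : ℂ) j * cfall (ab.2 : ℂ) m)) = 0 := by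
  induction j with
  | zero =>
    intro m hm
    simpa [cfall] using orth0 n r1 r2 s m h1 h2 (by omega) hs
  | succ j ih =>
    intro m hm
    have e1 := ih m (by omega)
    have e2 := ih (m + 1) (by omega)
    have : ∀ x y : ℂ, x = 0 → y = 0 → ((r2 : ℂ) - j - m) * x - y = 0 := by
      rintro x y rfl rfl; simp
    rw [← this _ _ e1 e2, mul_sum, ← sum_sub_distrib]
    apply sum_congr rfl
    rintro ⟨a, b⟩ hab
    simp only [HasAntidiagonal.mem_antidiagonal] at hab
    simp only [cfall_succ, ← hab]
    push_cast
    ring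

lemma orth2 (n r1 r2 s s' : ℕ) (h1 : r1 ≤ n) (h2 : r2 ≤ n)
    (hs : s ≤ min (min r1 (n - r1)) (min r2 (n - r2))) (hlt : s' < s) :
    ∑ ab ∈ antidiagonal r2, (((n - r1).choose ab.1 : ℂ) * (r1.choose ab.2 : ℂ)) *
      (hahn n r1 r2 s (ab.1 : ℂ) * hahn n r1 r2 s' (ab.1 : ℂ)) = 0 := by
  have : ∀ t, hahn n r1 r2 s' t = ∑ j ∈ range (s' + 1),
    ((-1 : ℂ) ^ j / j.factorial * cfall (s' : ℂ) j * cfall ((n : ℂ) - s' + 1) j /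
      (cfall ((n : ℂ) - r1) j * cfall (r2 : ℂ) j)) * cfall t j := by
    intro t
    unfold hahn cbinom
    apply sum_congr rfl
    intro j _
    ring
  simp only [this, mul_sum]
  rw [sum_comm]
  apply sum_eq_zero
  intro j hj
  have hj' : j < s := by simp at hj; omega
  have e := orth1 n r1 r2 s h1 h2 hs j 0 (by omega)
  rw [← mul_zero ((-1 : ℂ) ^ j / j.factorial * cfall (s' : ℂ) j * cfall ((n : ℂ) - s' + 1) j /
      (cfall ((n : ℂ) - r1) j * cfall (r2 : ℂ) j)), ← e, mul_sum]
  apply sum_congr rfl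
  intro ab _
  simp only [show ∀ z, cfall z 0 = 1 from fun z => by simp [cfall]]
  ring

/-- Orthogonality of the operators `Λ_s^{r1,r2}` and `Λ_{s'}^{r1,r2}` for `s ≠ s'` with
respect to the Hilbert–Schmidt inner product:
`Σ_{x1,x2} λ_s^{r1,r2}(|x2\x1|;n) λ_{s'}^{r1,r2}(|x2\x1|;n) = 0`. -/
theorem stmt_11 {Ω : Type*} [Fintype Ω] [DecidableEq Ω] (n r1 r2 s s' : ℕ)
    (hn : Fintype.card Ω = n) (h1 : r1 ≤ n) (h2 : r2 ≤ n)
    (hs : s ≤ min (min r1 (n - r1)) (min r2 (n - r2)))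
    (hs' : s' ≤ min (min r1 (n - r1)) (min r2 (n - r2))) (hne : s ≠ s') :
    ∑ x1 : {x : Finset Ω // x.card = r1}, ∑ x2 : {x : Finset Ω // x.card = r2},
        hahn n r1 r2 s ((((x2 : Finset Ω) \ (x1 : Finset Ω)).card : ℕ) : ℂ) *
          hahn n r1 r2 s' ((((x2 : Finset Ω) \ (x1 : Finset Ω)).card : ℕ) : ℂ) = 0 := by
  apply Finset.sum_eq_zero
  rintro ⟨x, hx⟩ _
  have hc : xᶜ.card = n - r1 := by rw [Finset.card_compl, hn, hx]
  have e := sum_sets r2 x (fun t => hahn n r1 r2 s (t : ℂ) * hahn n r1 r2 s' (t : ℂ))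
  rw [e, hc, hx]
  rcases lt_or_gt_of_ne hne with h | h
  · rw [← orth2 n r1 r2 s' s h1 h2 hs' h]
    exact Finset.sum_congr rfl fun ab _ => by ring
  · exact orth2 n r1 r2 s s' h1 h2 hs h
end
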